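/- Let E be a finite set and let F : 2^E → ℝ₊ be a monotone submodular set function with multilinear extension f. Then for all x, y ∈ [0,1]^E, ⟨y, ∇f(x)⟩ ≥ f(y) − f(x). -/

import Mathlib

open Finset

/-- The multilinear extension of a set function `F : 2^E → ℝ`. -/
noncomputable def multilinearExt {E : Type*} [Fintype E] [DecidableEq E]
    (F : Finset E → ℝ) (x : E → ℝ) : ℝ :=
  ∑ S : Finset E, F S * (∏ e ∈ S, x e) * ∏ e ∈ Sᶜ, (1 - x e)

/-- The partial derivative `∂f/∂x(e)` of the multilinear extension at `x`. -/
noncomputable def multilinearGrad {E : Type*} [Fintype E] [DecidableEq E]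
    (F : Finset E → ℝ) (x : E → ℝ) (e : E) : ℝ :=
  deriv (fun t => multilinearExt F (Function.update x e t)) (x e)

/-!
Write `f(x) = 𝔼[F(R)]`, where the random set `R` contains each `e` independently with probability
`x e`. Submodularity and monotonicity give `F(T) ≤ F(S) + ∑ e ∈ T, (F(S ∪ {e}) - F(S))` for all
`S` and `T`. Average this over `T ∼ y` and then over `S ∼ x`; the right-hand side becomes
`f(x) + ∑ e, y(e) 𝔼[F(R ∪ {e}) - F(R)]`. Since `f` is affine in each coordinate,
`∂f/∂x(e) = 𝔼[F(R ∪ {e}) - F(R ∖ {e})]`, which by monotonicity is at least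
`𝔼[F(R ∪ {e}) - F(R)]`.
-/

/-- Submodularity of a set function, as diminishing marginal returns. -/
def IsSubmodular {E M : Type*} [DecidableEq E] [Sub M] [LE M] (F : Finset E → M) : Prop :=
  ∀ S T : Finset E, S ⊆ T → ∀ e ∉ T, F (insert e T) - F T ≤ F (insert e S) - F S

namespace IsSubmodular

variable {E M : Type*} [DecidableEq E] [AddCommGroup M] [PartialOrder M] [IsOrderedAddMonoid M]
  {F : Finset E → M}

theorem map_union_le_add_sum_marginal (hsub : IsSubmodular F) (S T : Finset E) :
    F (S ∪ T) ≤ F S + ∑ e ∈ T, (F (insert e S) - F S) := by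
  induction T using Finset.induction_on with
  | empty => simp
  | insert a T ha ih =>
    have marginal_le : F (insert a (S ∪ T)) - F (S ∪ T) ≤ F (insert a S) - F S := by
      by_cases haS : a ∈ S
      · simp [haS]
      · exact hsub S (S ∪ T) subset_union_left a (by simp [haS, ha])
    calc F (S ∪ insert a T)
        = (F (insert a (S ∪ T)) - F (S ∪ T)) + F (S ∪ T) := by
          rw [union_insert, sub_add_cancel]
      _ ≤ (F (insert a S) - F S) + (F S + ∑ e ∈ T, (F (insert e S) - F S)) :=
          add_le_add marginal_le ih
      _ = F S + ∑ e ∈ insert a T, (F (insert e S) - F S) := by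
          rw [sum_insert ha, add_left_comm]

theorem map_le_add_sum_marginal (hsub : IsSubmodular F) (hmono : Monotone F) (S T : Finset E) :
    F T ≤ F S + ∑ e ∈ T, (F (insert e S) - F S) :=
  (hmono subset_union_right).trans (hsub.map_union_le_add_sum_marginal S T)

end IsSubmodular

theorem sum_finset_eq_sum_powerset_compl_singleton {E M : Type*} [Fintype E] [DecidableEq E]
    [AddCommMonoid M] (g : Finset E → M) (e : E) :
    ∑ S, g S = ∑ S ∈ ({e}ᶜ : Finset E).powerset, (g S + g (insert e S)) := by
  have univ_eq : (univ : Finset (Finset E)) = (insert e {e}ᶜ : Finset E).powerset := by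
    rw [insert_compl_self, powerset_univ]
  rw [univ_eq, sum_powerset_insert (by simp), sum_add_distrib]

section MultilinearExt

variable {E : Type*} [Fintype E] [DecidableEq E]

theorem multilinearExt_const (c : ℝ) (x : E → ℝ) : multilinearExt (fun _ => c) x = c := by
  have sum_prob_eq_one : ∑ S : Finset E, (∏ e ∈ S, x e) * ∏ e ∈ Sᶜ, (1 - x e) = 1 := by
    simp [← Fintype.prod_add]
  simp only [multilinearExt, mul_assoc, ← mul_sum, sum_prob_eq_one, mul_one]

theorem multilinearExt_add (F G : Finset E → ℝ) (x : E → ℝ) :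
    multilinearExt (fun S => F S + G S) x = multilinearExt F x + multilinearExt G x := by
  simp only [multilinearExt, add_mul, sum_add_distrib]

theorem multilinearExt_sub (F G : Finset E → ℝ) (x : E → ℝ) :
    multilinearExt (fun S => F S - G S) x = multilinearExt F x - multilinearExt G x := by
  simp only [multilinearExt, sub_mul, sum_sub_distrib]

theorem multilinearExt_sum_mul {ι : Type*} (s : Finset ι) (c : ι → ℝ)
    (G : ι → Finset E → ℝ) (x : E → ℝ) :
    multilinearExt (fun S => ∑ i ∈ s, c i * G i S) x = ∑ i ∈ s, c i * multilinearExt (G i) x := by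
  simp only [multilinearExt, mul_sum, sum_mul, mul_assoc]
  exact sum_comm

theorem multilinearExt_mono {F G : Finset E → ℝ} (hFG : ∀ S, F S ≤ G S) {x : E → ℝ}
    (hx : ∀ e, x e ∈ Set.Icc (0 : ℝ) 1) : multilinearExt F x ≤ multilinearExt G x := by
  simp only [multilinearExt, mul_assoc]
  refine sum_le_sum fun S _ => mul_le_mul_of_nonneg_right (hFG S) (mul_nonneg ?_ ?_)
  · exact prod_nonneg fun e _ => (hx e).1
  · exact prod_nonneg fun e _ => sub_nonneg.2 (hx e).2

-- In the notation of the header, the weight of `S` is the probability that `R ∖ {e} = S`.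
theorem multilinearExt_eq_sum_powerset_compl_singleton (F : Finset E → ℝ) (x : E → ℝ) (e : E) :
    multilinearExt F x = ∑ S ∈ ({e}ᶜ : Finset E).powerset,
      ((∏ i ∈ S, x i) * ∏ i ∈ (insert e S)ᶜ, (1 - x i)) *
        ((1 - x e) * F S + x e * F (insert e S)) := by
  rw [multilinearExt, sum_finset_eq_sum_powerset_compl_singleton _ e]
  refine sum_congr rfl fun S hS => ?_
  have he : e ∉ S := by simpa using hS
  rw [← mul_prod_erase Sᶜ _ (mem_compl.2 he), ← compl_insert, prod_insert he]
  ring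

theorem multilinearExt_update (F : Finset E → ℝ) (x : E → ℝ) (e : E) (t : ℝ) :
    multilinearExt F (Function.update x e t) =
      (1 - t) * multilinearExt (fun S => F (S.erase e)) x +
        t * multilinearExt (fun S => F (insert e S)) x := by
  simp only [multilinearExt_eq_sum_powerset_compl_singleton _ _ e, mul_sum, ← sum_add_distrib]
  refine sum_congr rfl fun S hS => ?_
  have he : e ∉ S := by simpa using hS
  have prod_compl_update : ∏ i ∈ (insert e S)ᶜ, (1 - Function.update x e t i) =
      ∏ i ∈ (insert e S)ᶜ, (1 - x i) :=
    prod_congr rfl fun i hi => by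
      rw [Function.update_of_ne (by rintro rfl; simp at hi)]
  rw [prod_update_of_notMem he, prod_compl_update, Function.update_self, insert_idem,
    erase_insert he, erase_eq_of_notMem he]
  ring

theorem multilinearExt_ite_mem (x : E → ℝ) (e : E) :
    multilinearExt (fun S => if e ∈ S then 1 else 0) x = x e := by
  have expand := multilinearExt_update (fun S => if e ∈ S then 1 else 0) x e (x e)
  simpa [multilinearExt_const] using expand

theorem hasDerivAt_multilinearExt_update (F : Finset E → ℝ) (x : E → ℝ) (e : E) (t : ℝ) :
    HasDerivAt (fun s => multilinearExt F (Function.update x e s))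
      (multilinearExt (fun S => F (insert e S) - F (S.erase e)) x) t := by
  simp only [multilinearExt_update, multilinearExt_sub]
  exact ((((hasDerivAt_id' t).const_sub 1).mul_const _).fun_add
    ((hasDerivAt_id' t).mul_const _)).congr_deriv (by ring)

theorem multilinearGrad_eq_multilinearExt (F : Finset E → ℝ) (x : E → ℝ) (e : E) :
    multilinearGrad F x e = multilinearExt (fun S => F (insert e S) - F (S.erase e)) x :=
  (hasDerivAt_multilinearExt_update F x e (x e)).deriv

theorem multilinearExt_marginal_le_multilinearGrad {F : Finset E → ℝ} (hmono : Monotone F)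
    {x : E → ℝ} (hx : ∀ e, x e ∈ Set.Icc (0 : ℝ) 1) (e : E) :
    multilinearExt (fun S => F (insert e S) - F S) x ≤ multilinearGrad F x e := by
  rw [multilinearGrad_eq_multilinearExt]
  exact multilinearExt_mono (fun S => sub_le_sub_left (hmono (erase_subset e S)) _) hx

theorem multilinearExt_le_add_sum_marginal {F : Finset E → ℝ} (hmono : Monotone F)
    (hsub : IsSubmodular F) {y : E → ℝ} (hy : ∀ e, y e ∈ Set.Icc (0 : ℝ) 1) (S : Finset E) :
    multilinearExt F y ≤ F S + ∑ e, y e * (F (insert e S) - F S) :=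
  calc multilinearExt F y
      ≤ multilinearExt
          (fun T => F S + ∑ e, (F (insert e S) - F S) * if e ∈ T then 1 else 0) y :=
        multilinearExt_mono
          (fun T => by simpa using hsub.map_le_add_sum_marginal hmono S T) hy
    _ = F S + ∑ e, (F (insert e S) - F S) * y e := by
        simp only [multilinearExt_add, multilinearExt_const, multilinearExt_sum_mul,
          multilinearExt_ite_mem]
    _ = F S + ∑ e, y e * (F (insert e S) - F S) := by simp only [mul_comm]

theorem inner_grad_ge_diff_general {F : Finset E → ℝ} (hmono : Monotone F)
    (hsub : IsSubmodular F) {x y : E → ℝ} (hx : ∀ e, x e ∈ Set.Icc (0 : ℝ) 1)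
    (hy : ∀ e, y e ∈ Set.Icc (0 : ℝ) 1) :
    multilinearExt F y - multilinearExt F x ≤ ∑ e, y e * multilinearGrad F x e := by
  rw [sub_le_iff_le_add']
  calc multilinearExt F y
      = multilinearExt (fun _ => multilinearExt F y) x := (multilinearExt_const _ x).symm
    _ ≤ multilinearExt (fun S => F S + ∑ e, y e * (F (insert e S) - F S)) x :=
        multilinearExt_mono (multilinearExt_le_add_sum_marginal hmono hsub hy) hx
    _ = multilinearExt F x + ∑ e, y e * multilinearExt (fun S => F (insert e S) - F S) x := by
        rw [multilinearExt_add, multilinearExt_sum_mul]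
    _ ≤ multilinearExt F x + ∑ e, y e * multilinearGrad F x e := by
        gcongr with e
        · exact (hy e).1
        · exact multilinearExt_marginal_le_multilinearGrad hmono hx e

end MultilinearExt

/-- For a nonnegative monotone submodular `F : 2^E → ℝ₊` with multilinear extension `f`,
for all `x, y ∈ [0,1]^E`, `⟨y, ∇f(x)⟩ ≥ f(y) − f(x)`. -/
theorem inner_grad_ge_diff {E : Type*} [Fintype E] [DecidableEq E]
    (F : Finset E → ℝ) (hFnn : ∀ S, 0 ≤ F S)
    (hmono : ∀ S T : Finset E, S ⊆ T → F S ≤ F T)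
    (hsub : ∀ S T : Finset E, S ⊆ T → ∀ e ∉ T,
      F (insert e T) - F T ≤ F (insert e S) - F S)
    (x y : E → ℝ)
    (hx : ∀ e, x e ∈ Set.Icc (0 : ℝ) 1)
    (hy : ∀ e, y e ∈ Set.Icc (0 : ℝ) 1) :
    multilinearExt F y - multilinearExt F x ≤ ∑ e, y e * multilinearGrad F x e :=
  inner_grad_ge_diff_general (fun S T => hmono S T) hsub hx hy
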